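/- arXiv:1704.00615 — 2 statements merged into one kernel-verified Lean document; each statement's English description precedes it below -/
import Mathlib

section
/- Let V be a finite dimensional real normed vector space, let O₁ and O₂ be open bounded subsets of V with closure(O₁) ⊆ O₂, and let K ⊆ V be a bounded set. Then there exists a real constant Q₀ = Q₀(O₁,O₂,K) ≥ 0 such that for every real Q ≥ Q₀, Q·O₁ + K ⊆ Q·O₂, where Q·O = {Q·x : x ∈ O} and A + B = {a + b : a ∈ A, b ∈ B}. -/
open Set Bornology
open scoped Pointwise

/-- Dilation absorption for super-strictly nested bounded open sets. -/
theorem stmt10 (V : Type*) [NormedAddCommGroup V] [NormedSpace ℝ V] [FiniteDimensional ℝ V]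
    (O₁ O₂ K : Set V) (h₁o : IsOpen O₁) (h₂o : IsOpen O₂)
    (hb₁ : IsBounded O₁) (hb₂ : IsBounded O₂)
    (hss : closure O₁ ⊆ O₂) (hK : IsBounded K) :
    ∃ Q₀ : ℝ, 0 ≤ Q₀ ∧ ∀ Q : ℝ, Q₀ ≤ Q → Q • O₁ + K ⊆ Q • O₂ := by
  haveI : ProperSpace V := FiniteDimensional.proper ℝ V
  obtain ⟨δ, hδ, hsub⟩ := hb₁.isCompact_closure.exists_thickening_subset_open h₂o hss
  obtain ⟨M, hM, hKM⟩ := hK.exists_pos_norm_le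
  refine ⟨M / δ + 1, by positivity, fun Q hQ => ?_⟩
  have hMd : 0 < M / δ := by positivity
  have hQ0 : 0 < Q := by linarith
  rintro _ ⟨_, ⟨x, hx, rfl⟩, k, hk, rfl⟩
  refine ⟨x + Q⁻¹ • k, hsub ?_, ?_⟩
  · rw [Metric.mem_thickening_iff]
    refine ⟨x, subset_closure hx, ?_⟩
    rw [dist_eq_norm, add_sub_cancel_left, norm_smul, norm_inv, Real.norm_of_nonneg hQ0.le,
      inv_mul_lt_iff₀ hQ0]
    have h1 : M / δ < Q := by linarith
    rw [div_lt_iff₀ hδ] at h1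
    exact (hKM k hk).trans_lt h1
  · simp [smul_add, smul_smul, hQ0.ne']
end

section
/- Let d ≥ 2 and g ∈ GL(d,ℝ). For the action of GL(d,ℝ) on the real projective space ℙ(ℝ^d) equipped with the Fubini–Study metric, g is Lipschitz with constant N₂(g)·‖g⁻¹‖², i.e. for all nonzero v, w ∈ ℝ^d, d([gv],[gw]) ≤ N₂(g)·‖g⁻¹‖²·d([v],[w]), where N₂(g) := sup { ‖gv ∧ gw‖ / ‖v ∧ w‖ : v, w ∈ ℝ^d linearly independent } is the operator norm of the second exterior power of g. -/
open Set Filter Topology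
open scoped RealInnerProductSpace

noncomputable section

abbrev GLd (d : ℕ) := Matrix.GeneralLinearGroup (Fin d) ℝ

abbrev Ed (d : ℕ) := EuclideanSpace ℝ (Fin d)

variable {d : ℕ}

/-- Operator norm of a real `d × d` matrix w.r.t. the Euclidean norm on `ℝ^d`. -/
noncomputable def opNorm (g : Matrix (Fin d) (Fin d) ℝ) : ℝ :=
  ‖LinearMap.toContinuousLinearMap (Matrix.toEuclideanLin g)‖

/-- The action of a matrix on `ℝ^d` (with its Euclidean structure). -/
noncomputable def matAct (g : Matrix (Fin d) (Fin d) ℝ) (v : Ed d) : Ed d :=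
  Matrix.toEuclideanLin g v

/-- `‖v ∧ w‖ = sqrt(‖v‖²‖w‖² − ⟨v,w⟩²)`. -/
noncomputable def wedgeNorm (v w : Ed d) : ℝ :=
  Real.sqrt (‖v‖ ^ 2 * ‖w‖ ^ 2 - ⟪v, w⟫ ^ 2)

/-- The Fubini–Study distance between the lines spanned by two nonzero vectors. -/
noncomputable def projDist (v w : Ed d) : ℝ :=
  wedgeNorm v w / (‖v‖ * ‖w‖)

/-- The operator norm of the second exterior power of `g`. -/
noncomputable def secondExtNorm (g : Matrix (Fin d) (Fin d) ℝ) : ℝ :=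
  sSup ((fun p : Ed d × Ed d => wedgeNorm (matAct g p.1) (matAct g p.2) / wedgeNorm p.1 p.2) ''
    {p : Ed d × Ed d | LinearIndependent ℝ ![p.1, p.2]})

theorem wedge_shear (v w : Ed d) (t : ℝ) : wedgeNorm v (w - t • v) = wedgeNorm v w := by
  unfold wedgeNorm
  congr 1
  rw [norm_sub_sq_real, inner_sub_right, inner_smul_right, inner_smul_right, norm_smul,
    real_inner_self_eq_norm_sq, real_inner_comm, mul_pow, Real.norm_eq_abs, sq_abs]
  ring

theorem wedge_le (v w : Ed d) : wedgeNorm v w ≤ ‖v‖ * ‖w‖ := by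
  unfold wedgeNorm
  apply Real.sqrt_le_iff.2
  refine ⟨by positivity, ?_⟩
  nlinarith [sq_nonneg (⟪v, w⟫ : ℝ)]

theorem wedge_eq (v w : Ed d) (hv : v ≠ 0) :
    wedgeNorm v w = ‖v‖ * ‖w - ((⟪v, w⟫ : ℝ) / ‖v‖ ^ 2) • v‖ := by
  have hv' : ‖v‖ ^ 2 ≠ 0 := by simpa using hv
  rw [← wedge_shear v w ((⟪v, w⟫ : ℝ) / ‖v‖ ^ 2)]
  have h0 : (⟪v, w - ((⟪v, w⟫ : ℝ) / ‖v‖ ^ 2) • v⟫ : ℝ) = 0 := by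
    rw [inner_sub_right, inner_smul_right, real_inner_self_eq_norm_sq, div_mul_cancel₀ _ hv']
    ring
  rw [wedgeNorm, h0, ← mul_pow]
  rw [show ∀ x : ℝ, x ^ 2 - 0 ^ 2 = x ^ 2 from fun x => by ring]
  exact Real.sqrt_sq (by positivity)

theorem matAct_le (g : Matrix (Fin d) (Fin d) ℝ) (v : Ed d) : ‖matAct g v‖ ≤ opNorm g * ‖v‖ :=
  (LinearMap.toContinuousLinearMap (Matrix.toEuclideanLin g)).le_opNorm v

theorem wedge_matAct_le (g : Matrix (Fin d) (Fin d) ℝ) (v w : Ed d) (hv : v ≠ 0) :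
    wedgeNorm (matAct g v) (matAct g w) ≤ opNorm g ^ 2 * wedgeNorm v w := by
  have h0 : 0 ≤ opNorm g := norm_nonneg _
  rw [wedge_eq v w hv]
  set t := (⟪v, w⟫ : ℝ) / ‖v‖ ^ 2
  have h1 : matAct g (w - t • v) = matAct g w - t • matAct g v := by simp [matAct]
  rw [← wedge_shear _ _ t, ← h1]
  calc _ ≤ ‖matAct g v‖ * ‖matAct g (w - t • v)‖ := wedge_le _ _
    _ ≤ (opNorm g * ‖v‖) * (opNorm g * ‖w - t • v‖) := by
        gcongr <;> apply matAct_le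
    _ = _ := by ring

theorem wedge_nonneg (v w : Ed d) : 0 ≤ wedgeNorm v w := Real.sqrt_nonneg _

theorem wedge_le_secondExt (g : Matrix (Fin d) (Fin d) ℝ) (v w : Ed d) (hv : v ≠ 0) :
    wedgeNorm (matAct g v) (matAct g w) ≤ secondExtNorm g * wedgeNorm v w := by
  by_cases hW : wedgeNorm v w = 0
  · have := wedge_matAct_le g v w hv
    rw [hW] at this ⊢
    simpa using this
  · have hpos : 0 < wedgeNorm v w := lt_of_le_of_ne (wedge_nonneg v w) (Ne.symm hW)
    rw [← div_le_iff₀ hpos]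
    refine le_csSup ⟨opNorm g ^ 2, ?_⟩ ⟨(v, w), ?_, rfl⟩
    · rintro _ ⟨⟨a, b⟩, hab, rfl⟩
      have ha : a ≠ 0 := LinearIndependent.ne_zero 0 hab
      exact div_le_of_le_mul₀ (wedge_nonneg _ _) (by positivity) (wedge_matAct_le g a b ha)
    · refine (LinearIndependent.pair_iff' hv).2 ?_
      rintro a rfl
      apply hW
      rw [← wedge_shear _ _ a]
      simp [wedgeNorm]

theorem norm_le_inv (g : GLd d) (v : Ed d) :
    ‖v‖ ≤ opNorm ((g⁻¹ : GLd d) : Matrix (Fin d) (Fin d) ℝ) *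
      ‖matAct (g : Matrix (Fin d) (Fin d) ℝ) v‖ := by
  have h : matAct ((g⁻¹ : GLd d) : Matrix (Fin d) (Fin d) ℝ)
      (matAct (g : Matrix (Fin d) (Fin d) ℝ) v) = v := by
    have h2 : ((g⁻¹ : GLd d) : Matrix (Fin d) (Fin d) ℝ) * (g : Matrix (Fin d) (Fin d) ℝ) = 1 :=
      Units.inv_mul g
    simp only [matAct, Matrix.toLpLin_apply, Matrix.mulVec_mulVec]
    rw [h2]
    simp
  have := matAct_le ((g⁻¹ : GLd d) : Matrix (Fin d) (Fin d) ℝ)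
    (matAct (g : Matrix (Fin d) (Fin d) ℝ) v)
  rwa [h] at this

/-- `g` acts on projective space with Lipschitz constant
`‖Λ²g‖·‖g⁻¹‖²`. -/
theorem stmt12 (d : ℕ) (hd : 2 ≤ d) (g : GLd d) :
    ∀ v w : Ed d, v ≠ 0 → w ≠ 0 →
      projDist (matAct (g : Matrix (Fin d) (Fin d) ℝ) v)
          (matAct (g : Matrix (Fin d) (Fin d) ℝ) w) ≤
        secondExtNorm (g : Matrix (Fin d) (Fin d) ℝ) *
          opNorm ((g⁻¹ : GLd d) : Matrix (Fin d) (Fin d) ℝ) ^ 2 * projDist v w := by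
  intro v w hv hw
  have h1 := wedge_le_secondExt (g : Matrix (Fin d) (Fin d) ℝ) v w hv
  have hgv := norm_le_inv g v
  have hgw := norm_le_inv g w
  have hv' : 0 < ‖v‖ := norm_pos_iff.2 hv
  have hw' : 0 < ‖w‖ := norm_pos_iff.2 hw
  have hK : 0 ≤ opNorm ((g⁻¹ : GLd d) : Matrix (Fin d) (Fin d) ℝ) := norm_nonneg _
  have hN := (wedge_nonneg _ _).trans h1
  unfold projDist
  set N := secondExtNorm (g : Matrix (Fin d) (Fin d) ℝ)
  set K := opNorm ((g⁻¹ : GLd d) : Matrix (Fin d) (Fin d) ℝ)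
  set a := ‖matAct (g : Matrix (Fin d) (Fin d) ℝ) v‖
  set b := ‖matAct (g : Matrix (Fin d) (Fin d) ℝ) w‖
  have ha : 0 < a := pos_of_mul_pos_right (hv'.trans_le hgv) hK
  have hb : 0 < b := pos_of_mul_pos_right (hw'.trans_le hgw) hK
  rw [← mul_div_assoc, div_le_div_iff₀ (by positivity) (by positivity)]
  calc _ ≤ (N * wedgeNorm v w) * ((K * a) * (K * b)) := by gcongr
    _ = _ := by ring
end
end
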